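/- Let R be an integral domain of characteristic zero that is finitely generated as a Z-module, and let A be a commutative R-algebra that is finitely generated as an R-module. Let R-hat be the completion of R at a maximal ideal. Then every prime ideal of A ⊗_R R-hat has height at most 1; in particular the Krull dimension of A ⊗_R R-hat is at most 1. -/

import Mathlib

open TensorProduct

/-- An algebra over a Noetherian ring `R`, complete for an extended ideal `P S` and with
`R → S / P S` surjective, is Noetherian. -/
theorem aux_noetherian (R S : Type*) [CommRing R] [IsNoetherianRing R] [CommRing S] [Algebra R S]
    (P : Ideal R) [IsAdicComplete (P.map (algebraMap R S)) S]
    (hsurj : Function.Surjective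
      ((Ideal.Quotient.mk (P.map (algebraMap R S))).comp (algebraMap R S))) :
    IsNoetherianRing S := by
  obtain ⟨s, hs⟩ := (IsNoetherian.noetherian P : P.FG)
  let K := P.map (algebraMap R S)
  let J := MvPolynomial.idealOfVars s R
  let T := AdicCompletion J (MvPolynomial s R)
  have hT : IsNoetherianRing T :=
    isNoetherianRing_of_ringEquiv _ (MvPowerSeries.toAdicCompletionAlgEquiv s R).toRingEquiv
  have hTc : IsAdicComplete (J.map (algebraMap (MvPolynomial s R) T)) T :=
    AdicCompletion.isAdicComplete_self J (MvPolynomial.idealOfVars_fg s R)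
  let φ : MvPolynomial s R →+* S :=
    (MvPolynomial.aeval (R := R) (fun i : s => algebraMap R S i.1)).toRingHom
  have hφX : ∀ i, φ (MvPolynomial.X i) = algebraMap R S i.1 := fun i => by simp [φ]
  have hφC : ∀ r, φ (MvPolynomial.C r) = algebraMap R S r := fun i => by simp [φ]
  have hJK : J.map φ = K := by
    simp only [J, K, MvPolynomial.idealOfVars, ← hs, Ideal.map_span]
    congr 1
    ext x
    simp [hφX]
  have hle : ∀ n, J ^ n ≤ (K ^ n).comap φ := fun n => by
    rw [← Ideal.map_le_iff_le_comap, Ideal.map_pow, hJK]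
  let f : (n : ℕ) → T →+* S ⧸ K ^ n := fun n =>
    (Ideal.quotientMap (K ^ n) φ (hle n)).comp (AdicCompletion.evalₐ J n).toRingHom
  have hf : ∀ {m n : ℕ} (h : m ≤ n),
      (Ideal.Quotient.factorPow K h).comp (f n) = f m := by
    intro m n h
    ext x
    obtain ⟨x, rfl⟩ := AdicCompletion.mk_surjective _ _ x
    have h1 : Ideal.Quotient.mk (J ^ m) (x m) = Ideal.Quotient.mk (J ^ m) (x n) := by
      have := AdicCompletion.AdicCauchySequence.mk_eq_mk h x
      rw [Ideal.Quotient.eq]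
      have h2 := (Submodule.Quotient.eq _).1 this
      rw [← neg_sub]
      simpa using neg_mem h2
    change Ideal.Quotient.factorPow K h (Ideal.quotientMap (K ^ n) φ (hle n)
      (AdicCompletion.evalₐ J n (AdicCompletion.mk J _ x))) =
      Ideal.quotientMap (K ^ m) φ (hle m) (AdicCompletion.evalₐ J m (AdicCompletion.mk J _ x))
    rw [AdicCompletion.evalₐ_mk, AdicCompletion.evalₐ_mk]
    erw [h1]
    simp
  let F : T →+* S := IsAdicComplete.liftRingHom K f hf
  have hF : F.comp (algebraMap (MvPolynomial s R) T) = φ := by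
    refine RingHom.ext fun q => ?_
    have hH : IsHausdorff K S := (inferInstance : IsHausdorff (P.map (algebraMap R S)) S)
    rw [hH.eq_iff_smodEq]
    intro n
    have h1 : Ideal.Quotient.mk (K ^ n) (F (algebraMap (MvPolynomial s R) T q)) =
        Ideal.Quotient.mk (K ^ n) (φ q) := by
      rw [IsAdicComplete.mk_liftRingHom]
      change Ideal.quotientMap (K ^ n) φ (hle n)
        (AdicCompletion.evalₐ J n (algebraMap (MvPolynomial s R) T q)) = _
      rw [AlgHom.commutes]
      simp
    rw [Ideal.Quotient.eq] at h1
    rw [SModEq.sub_mem]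
    simpa using h1
  have hmap : (J.map (algebraMap (MvPolynomial s R) T)).map F = K := by
    rw [Ideal.map_map, hF, hJK]
  have hH : IsHausdorff ((J.map (algebraMap (MvPolynomial s R) T)).map F) S := by
    rw [hmap]; infer_instance
  refine isNoetherianRing_of_surjective T S F (surjective_of_mk_map_comp_surjective F
    (I := J.map (algebraMap (MvPolynomial s R) T)) ?_)
  rw [hmap]
  intro y
  obtain ⟨r, hr⟩ := hsurj y
  refine ⟨algebraMap (MvPolynomial s R) T (MvPolynomial.C r), ?_⟩
  rw [← hr, RingHom.comp_apply, ← RingHom.comp_apply F, hF, hφC]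
  rfl

theorem aux_dim (R S B : Type*) [CommRing R] [IsDomain R] [Module.Finite ℤ R]
    [CommRing S] [IsNoetherianRing S] [Algebra R S] [CommRing B] [Algebra S B] [Module.Finite S B]
    (P : Ideal R) (hP : P.IsMaximal) (hK : (P.map (algebraMap R S)).IsMaximal)
    (hloc : P.map (algebraMap R S) ≤ (⊥ : Ideal S).jacobson) :
    ringKrullDim B ≤ 1 := by
  have hB : IsNoetherianRing B := IsNoetherianRing.of_finite S B
  obtain ⟨x, hx, hxP⟩ : ∃ x ∈ P, ∀ Q : Ideal R, Q.IsPrime → Q ≤ P → x ∈ Q → Q = P := by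
    by_cases hb : P = ⊥
    · exact ⟨0, zero_mem _, fun Q _ h _ => by subst hb; exact le_bot_iff.1 h⟩
    · obtain ⟨x, hx, hx0⟩ := Submodule.exists_mem_ne_zero_of_ne_bot hb
      refine ⟨x, hx, fun Q hQ h hxQ => ?_⟩
      have h1 := Ideal.comap_ne_bot_of_integral_mem (R := ℤ) hx0 hxQ
        (Algebra.IsIntegral.isIntegral x)
      have h2 : (Q.comap (algebraMap ℤ R)).IsMaximal :=
        (Ideal.IsPrime.isMaximal (Ideal.comap_isPrime _ _) h1)
      have h3 := Ideal.isMaximal_of_isIntegral_of_isMaximal_comap Q h2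
      exact h3.eq_of_le hP.ne_top h
  rw [ringKrullDim_le_iff_isMaximal_height_le]
  intro M hM
  have hMS : (M.comap (algebraMap S B)).IsMaximal :=
    Ideal.isMaximal_comap_of_isIntegral_of_isMaximal M
  have hMK : P.map (algebraMap R S) = M.comap (algebraMap S B) :=
    hK.eq_of_le hMS.ne_top (hloc.trans (sInf_le ⟨bot_le, hMS⟩))
  have hPR : P ≤ (M.comap (algebraMap S B)).comap (algebraMap R S) := by
    rw [← Ideal.map_le_iff_le_comap]; exact hMK.le
  have hMR : P = (M.comap (algebraMap S B)).comap (algebraMap R S) :=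
    hP.eq_of_le (Ideal.comap_isPrime _ _).ne_top hPR
  have hmin : M ∈ (Ideal.span {algebraMap S B (algebraMap R S x)}).minimalPrimes := by
    refine ⟨⟨hM.isPrime, ?_⟩, ?_⟩
    · rw [Ideal.span_singleton_le_iff_mem]
      exact hPR hx
    · rintro Q ⟨hQ, hxQ⟩ hQM
      rw [Ideal.span_singleton_le_iff_mem] at hxQ
      have h1 : (Q.comap (algebraMap S B)).comap (algebraMap R S) = P := by
        refine hxP _ inferInstance ?_ hxQ
        rw [hMR]
        exact Ideal.comap_mono (Ideal.comap_mono hQM)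
      have h2 : P.map (algebraMap R S) ≤ Q.comap (algebraMap S B) := by
        rw [Ideal.map_le_iff_le_comap, h1]
      have h3 := hK.eq_of_le (Ideal.comap_isPrime _ _).ne_top h2
      have h4 := Ideal.isMaximal_of_isIntegral_of_isMaximal_comap Q (h3 ▸ hK)
      exact (h4.eq_of_le hM.ne_top hQM).ge
  have := Ideal.height_le_one_of_isPrincipal_of_mem_minimalPrimes _ M hmin
  exact_mod_cast this

/-- Let `R` be an integral domain of characteristic zero, finitely generated as a `ℤ`-module,
and `A` a commutative `R`-algebra which is module-finite over `R`. For a maximal ideal `P` of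
`R`, every prime of `A ⊗_R R̂` (with `R̂` the `P`-adic completion of `R`) has height at most
`1`; in particular the Krull dimension of `A ⊗_R R̂` is at most `1`. -/
theorem stmt_3 (R A : Type*) [CommRing R] [IsDomain R] [CharZero R] [Module.Finite ℤ R]
    [CommRing A] [Algebra R A] [Module.Finite R A]
    (P : Ideal R) (hP : P.IsMaximal) :
    (∀ p : PrimeSpectrum (A ⊗[R] AdicCompletion P R), Order.height p ≤ 1) ∧
      ringKrullDim (A ⊗[R] AdicCompletion P R) ≤ 1 := by
  have hR : IsNoetherianRing R := IsNoetherianRing.of_finite ℤ R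
  have hfg : P.FG := IsNoetherian.noetherian P
  have hc := AdicCompletion.isAdicComplete_self P hfg
  have hK := AdicCompletion.isMaximal_map_of_le P P le_rfl hfg
  have hS : IsNoetherianRing (AdicCompletion P R) := by
    refine aux_noetherian R _ P fun y => ?_
    obtain ⟨y, rfl⟩ := Ideal.Quotient.mk_surjective y
    obtain ⟨r, hr⟩ := Ideal.Quotient.mk_surjective (AdicCompletion.evalOneₐ P y)
    refine ⟨r, ?_⟩
    rw [RingHom.comp_apply, Ideal.Quotient.eq, ← AdicCompletion.ker_evalOneₐ_eq_map P hfg,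
      RingHom.mem_ker, map_sub, sub_eq_zero]
    exact hr
  have hdim : ringKrullDim (A ⊗[R] AdicCompletion P R) ≤ 1 := by
    rw [ringKrullDim_eq_of_ringEquiv (Algebra.TensorProduct.comm R A
      (AdicCompletion P R)).toRingEquiv]
    exact aux_dim R (AdicCompletion P R) _ P hP hK (IsAdicComplete.le_jacobson_bot _)
  refine ⟨fun p => ?_, hdim⟩
  have := (Order.height_le_krullDim p).trans hdim
  exact_mod_cast this
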